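/- arXiv:1608.03151 — 2 statements merged into one kernel-verified Lean document; each statement's English description precedes it below -/
import Mathlib

section
/- Let m, n ≥ 1 and let x, a, b₁, b₂ be real numbers; write |b|² = b₁² + b₂². Let K be the mn×mn complex matrix K = I_n ⊗ T_m(−a, x, a) + T_n(−b₁ + i·b₂, 0, b₁ + i·b₂) ⊗ J_m. Then det K = [ ∏_{j=1}^{⌊m/2⌋} ∏_{k=1}^{⌊n/2⌋} ( x² + 4a² cos²(jπ/(m+1)) + 4|b|² cos²(kπ/(n+1)) ) ]² · c(m,n), where c(m,n) = 1 if m and n are both even; c(m,n) = Y_m(a, 0; x) if m is even and n is odd; c(m,n) = Y_n(b₁, b₂; x) if m is odd and n is even; and c(m,n) = x · Y_m(a, 0; x) · Y_n(b₁, b₂; x) if m and n are both odd. Here Y_m(b, c; x) = ∏_{j=1}^{⌊m/2⌋} ( x² + 4(b² + c²) cos²(jπ/(m+1)) ). -/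
open Matrix Kronecker Real Finset

/-- The `n × n` tridiagonal Toeplitz matrix with `c₀` on the diagonal, `c₁` on the
superdiagonal and `c₋₁` on the subdiagonal. -/
def triToeplitz (n : ℕ) (cm c0 cp : ℂ) : Matrix (Fin n) (Fin n) ℂ :=
  Matrix.of fun j k =>
    if j = k then c0
    else if (j : ℕ) + 1 = (k : ℕ) then cp
    else if (k : ℕ) + 1 = (j : ℕ) then cm
    else 0

/-- The `m × m` antidiagonal matrix of ones. -/
def antiDiagOnes (m : ℕ) : Matrix (Fin m) (Fin m) ℂ :=
  Matrix.of fun j k => if (j : ℕ) + (k : ℕ) + 1 = m then 1 else 0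

/-- `Y_m(b, c; x) = ∏_{j=1}^{⌊m/2⌋} (x² + 4(b²+c²) cos²(jπ/(m+1)))`. -/
noncomputable def Y (m : ℕ) (b c x : ℝ) : ℝ :=
  ∏ j ∈ Finset.Icc 1 (m / 2),
    (x ^ 2 + 4 * (b ^ 2 + c ^ 2) * Real.cos ((j : ℝ) * Real.pi / ((m : ℝ) + 1)) ^ 2)

/-- matrix supported on the diagonal and antidiagonal -/
def xMat (m : ℕ) (d e : ℕ → ℂ) : Matrix (Fin m) (Fin m) ℂ :=
  Matrix.of fun p q => (if p = q then d q else 0) + (if (p : ℕ) + q + 1 = m then e q else 0)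

theorem xMat_det (m : ℕ) (d e : ℕ → ℂ) :
    (xMat m d e).det = (∏ k ∈ Finset.range (m / 2), (d k * d (m - 1 - k) - e k * e (m - 1 - k)))
      * (if Even m then 1 else d (m / 2) + e (m / 2)) := by
  classical
  have hB : (xMat m d e).BlockTriangular (fun p : Fin m => min (p : ℕ) (m - 1 - p)) := by
    intro i j hij
    have h1 : i ≠ j := by rintro rfl; simp at hij
    have h2 : ¬ ((i : ℕ) + j + 1 = m) := by
      intro h; simp only at hij; omega
    simp [xMat, h1, h2]
  rw [hB.det]
  have himg : (Finset.univ.image (fun p : Fin m => min (p : ℕ) (m - 1 - p)))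
      = Finset.range ((m + 1) / 2) := by
    ext k
    simp only [Finset.mem_image, Finset.mem_univ, true_and, Finset.mem_range]
    constructor
    · rintro ⟨p, rfl⟩; have := p.2; omega
    · intro h; exact ⟨⟨k, by omega⟩, by simp only; omega⟩
  rw [himg]
  have hblk : ∀ k ∈ Finset.range (m / 2),
      ((xMat m d e).toSquareBlock (fun p : Fin m => min (p : ℕ) (m - 1 - p)) k).det
        = d k * d (m - 1 - k) - e k * e (m - 1 - k) := by
    intro k hk
    rw [Finset.mem_range] at hk
    let f : Fin 2 → {p : Fin m // min (p : ℕ) (m - 1 - p) = k} :=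
      ![⟨⟨k, by omega⟩, by simp only; omega⟩, ⟨⟨m - 1 - k, by omega⟩, by simp only; omega⟩]
    have hf : Function.Bijective f := by
      constructor
      · intro i j h
        fin_cases i <;> fin_cases j <;> simp [f] at h ⊢ <;> omega
      · rintro ⟨⟨p, hp⟩, h⟩
        simp only at h
        by_cases hpk : p = k
        · exact ⟨0, by simp [f, hpk]⟩
        · refine ⟨1, ?_⟩
          simp [f]; omega
    rw [← Matrix.det_submatrix_equiv_self (Equiv.ofBijective f hf), Matrix.det_fin_two]
    have h1 : ¬ (k = m - 1 - k) := by omega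
    have h2 : ¬ (m - 1 - k = k) := by omega
    have h3 : ¬ (k + k + 1 = m) := by omega
    have h4 : ¬ (m - 1 - k + (m - 1 - k) + 1 = m) := by omega
    have h5 : k + (m - 1 - k) + 1 = m := by omega
    have h6 : m - 1 - k + k + 1 = m := by omega
    simp [Matrix.toSquareBlock_def, xMat, f, h1, h2, h3, h4, h5, h6]
    ring
  by_cases hm : Even m
  · have : (m + 1) / 2 = m / 2 := by obtain ⟨t, rfl⟩ := hm; omega
    rw [this, if_pos hm, mul_one]
    exact Finset.prod_congr rfl hblk
  · rw [if_neg hm]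
    rw [Nat.not_even_iff_odd] at hm
    have hh : (m + 1) / 2 = m / 2 + 1 := by obtain ⟨t, rfl⟩ := hm; omega
    rw [hh, Finset.prod_range_succ, Finset.prod_congr rfl hblk]
    congr 1
    have h2 : m / 2 + m / 2 + 1 = m := by obtain ⟨t, rfl⟩ := hm; omega
    let p0 : {p : Fin m // min (p : ℕ) (m - 1 - p) = m / 2} :=
      ⟨⟨m / 2, by omega⟩, by simp only; omega⟩
    have : Unique {p : Fin m // min (p : ℕ) (m - 1 - p) = m / 2} :=
      { default := p0
        uniq := by
          rintro ⟨⟨p, hp⟩, h⟩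
          simp only at h
          simp [p0]; omega }
    rw [Matrix.det_unique]
    have : (default : {p : Fin m // min (p : ℕ) (m - 1 - p) = m / 2}) = p0 :=
      Subsingleton.elim _ _
    rw [this]
    simp [Matrix.toSquareBlock_def, xMat, p0, h2]

theorem prod_fold (n : ℕ) (f : ℕ → ℂ) :
    ∏ k : Fin n, f k = (∏ k ∈ Finset.range (n / 2), (f k * f (n - 1 - k)))
      * (if Even n then 1 else f (n / 2)) := by
  have h := xMat_det n f 0
  have h2 : xMat n f 0 = Matrix.diagonal (fun k : Fin n => f k) := by
    ext i j
    by_cases hij : i = j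
    · subst hij; simp [xMat]
    · simp [xMat, hij]
  rw [h2, Matrix.det_diagonal] at h
  simpa using h

/-- angle -/
noncomputable def ang (m : ℕ) (p : ℕ) : ℝ := ((p : ℝ) + 1) * Real.pi / ((m : ℝ) + 1)

/-- eigenvector matrix of a tridiagonal Toeplitz matrix -/
noncomputable def eigM (m : ℕ) (r : ℂ) : Matrix (Fin m) (Fin m) ℂ :=
  Matrix.of fun j p => r ^ (j : ℕ) * (Real.sin (((j : ℕ) + 1 : ℝ) * ang m p) : ℂ)

theorem ang_pos (m p : ℕ) : 0 < ang m p := by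
  unfold ang; positivity

theorem ang_lt (m p : ℕ) (h : p < m) : ang m p < Real.pi := by
  unfold ang
  rw [div_lt_iff₀ (by positivity), mul_comm]
  have : (p : ℝ) < m := by exact_mod_cast h
  have := Real.pi_pos
  nlinarith

theorem ang_top (m p : ℕ) : ((m : ℝ) + 1) * ang m p = ((p : ℝ) + 1) * Real.pi := by
  unfold ang; field_simp

theorem ang_rev (m p q : ℕ) (h : p + q + 1 = m) : ang m p = Real.pi - ang m q := by
  unfold ang
  subst h
  push_cast
  field_simp
  ring

/-- entries of triToeplitz times vector, using zero boundary values -/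
theorem tri_mulVec (m : ℕ) (cm c0 cp : ℂ) (v : ℕ → ℂ) (h0 : v 0 = 0) (h1 : v (m + 1) = 0)
    (j : Fin m) :
    ∑ k : Fin m, triToeplitz m cm c0 cp j k * v (k + 1)
      = cm * v j + c0 * v (j + 1) + cp * v (j + 2) := by
  have key : ∀ k : Fin m, triToeplitz m cm c0 cp j k * v (k + 1)
      = (fun i : ℕ => (if i = j then c0 * v (i + 1) else 0)
        + (if i = (j : ℕ) + 1 then cp * v (i + 1) else 0)
        + (if i + 1 = (j : ℕ) then cm * v (i + 1) else 0)) k := by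
    intro k
    simp only [triToeplitz, Matrix.of_apply, Fin.ext_iff]
    by_cases h1 : (j : ℕ) = k
    · have : ¬ (j : ℕ) + 1 = j := by omega
      simp [← h1]
    · by_cases h2 : (j : ℕ) + 1 = k
      · have h3 : ¬ (k : ℕ) + 1 = j := by omega
        have h4 : ¬ (k : ℕ) = j := by omega
        simp [h1, h2, h3, h4]
      · have h4 : ¬ (k : ℕ) = j := by omega
        have h5 : ¬ (k : ℕ) = j + 1 := by omega
        simp [h1, h2, h4, h5]
  rw [Finset.sum_congr rfl (fun k _ => key k),
    Fin.sum_univ_eq_sum_range (fun i : ℕ => (if i = j then c0 * v (i + 1) else 0)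
        + (if i = (j : ℕ) + 1 then cp * v (i + 1) else 0)
        + (if i + 1 = (j : ℕ) then cm * v (i + 1) else 0)) m,
    Finset.sum_add_distrib, Finset.sum_add_distrib]
  have hj := j.2
  rw [Finset.sum_ite_eq' , if_pos (by simp)]
  rw [Finset.sum_ite_eq']
  have e2 : (if (j : ℕ) + 1 ∈ Finset.range m then cp * v ((j : ℕ) + 1 + 1) else 0)
      = cp * v ((j : ℕ) + 2) := by
    by_cases h : (j : ℕ) + 1 < m
    · simp [h]
    · have : (j : ℕ) + 2 = m + 1 := by omega
      simp [h, this, h1]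
  have e3 : (∑ i ∈ Finset.range m, if i + 1 = (j : ℕ) then cm * v (i + 1) else 0)
      = cm * v j := by
    rcases Nat.eq_zero_or_pos (j : ℕ) with h | h
    · simp [h, h0]
    · have : ∀ i ∈ Finset.range m, (if i + 1 = (j : ℕ) then cm * v (i + 1) else 0)
          = if i = (j : ℕ) - 1 then cm * v j else 0 := by
        intro i _
        by_cases hi : i + 1 = (j : ℕ)
        · have : i = (j : ℕ) - 1 := by omega
          rw [if_pos hi, if_pos this, hi]
        · have : ¬ i = (j : ℕ) - 1 := by omega
          rw [if_neg hi, if_neg this]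
      rw [Finset.sum_congr rfl this, Finset.sum_ite_eq', if_pos (by simp; omega)]
  rw [e2, e3]
  ring

theorem tri_eig (m : ℕ) (cm c0 cp r β : ℂ) (hr : r ≠ 0) (h1 : β = r * cp) (h2 : β * r = cm) :
    triToeplitz m cm c0 cp * eigM m r
      = eigM m r * Matrix.diagonal
          (fun p : Fin m => c0 + 2 * β * (Real.cos (ang m p) : ℂ)) := by
  ext j p
  rw [Matrix.mul_diagonal, Matrix.mul_apply]
  have := tri_mulVec m cm c0 cp
    (fun i => r ^ i * r⁻¹ * (Real.sin ((i : ℝ) * ang m p) : ℂ)) (by simp)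
    (by
      have : Real.sin (((m + 1 : ℕ) : ℝ) * ang m p) = 0 := by
        push_cast
        rw [ang_top]
        have := Real.sin_nat_mul_pi ((p : ℕ) + 1)
        push_cast at this
        exact this
      simp only [this]; simp) j
  have e : ∀ k : Fin m, triToeplitz m cm c0 cp j k * eigM m r k p
      = triToeplitz m cm c0 cp j k * ((fun i : ℕ => r ^ i * r⁻¹ * (Real.sin ((i : ℝ) * ang m p) : ℂ)) (k + 1)) := by
    intro k
    simp only [eigM, Matrix.of_apply]
    congr 1
    push_cast
    field_simp
    ring
  rw [Finset.sum_congr rfl (fun k _ => e k), this]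
  simp only [eigM, Matrix.of_apply]
  have s1 : Real.sin (((j : ℕ) : ℝ) * ang m p) = Real.sin (((j : ℕ) + 1 : ℝ) * ang m p) * Real.cos (ang m p)
      - Real.cos (((j : ℕ) + 1 : ℝ) * ang m p) * Real.sin (ang m p) := by
    rw [← Real.sin_sub]; congr 1; ring
  have s2 : Real.sin (((j : ℕ) + 2 : ℝ) * ang m p) = Real.sin (((j : ℕ) + 1 : ℝ) * ang m p) * Real.cos (ang m p)
      + Real.cos (((j : ℕ) + 1 : ℝ) * ang m p) * Real.sin (ang m p) := by
    rw [← Real.sin_add]; congr 1; ring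
  push_cast [-Complex.ofReal_sin, -Complex.ofReal_cos]
  rw [s1, s2]
  push_cast [-Complex.ofReal_sin, -Complex.ofReal_cos]
  subst h2
  subst h1
  field_simp
  ring

theorem isUnit_of_eig (m : ℕ) (M P : Matrix (Fin m) (Fin m) ℂ) (d : Fin m → ℂ)
    (hd : Function.Injective d) (hP : ∀ p, P.col p ≠ 0)
    (h : M * P = P * Matrix.diagonal d) : IsUnit P := by
  rw [← Matrix.linearIndependent_cols_iff_isUnit]
  refine Module.End.eigenvectors_linearIndependent' (Matrix.toLin' M) d hd P.col ?_
  intro p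
  rw [Module.End.hasEigenvector_iff, Module.End.mem_eigenspace_iff]
  refine ⟨?_, hP p⟩
  ext j
  have := congrFun (congrFun h j) p
  rw [Matrix.mul_diagonal, Matrix.mul_apply] at this
  simp only [Matrix.toLin'_apply, Matrix.mulVec, dotProduct, Matrix.col_apply, Pi.smul_apply,
    smul_eq_mul]
  rw [this, mul_comm]

theorem eigM_isUnit (m : ℕ) (r : ℂ) (hr : r ≠ 0) : IsUnit (eigM m r) := by
  refine isUnit_of_eig m _ _ _ ?_ ?_ (tri_eig m r 0 r⁻¹ r 1 hr (by field_simp) (by simp))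
  · intro p q h
    simp only [zero_add, mul_one] at h
    have h' := mul_left_cancel₀ (two_ne_zero) h
    have h'' : Real.cos (ang m p) = Real.cos (ang m q) := by exact_mod_cast h'
    have := Real.injOn_cos ⟨(ang_pos m p).le, (ang_lt m p p.2).le⟩
      ⟨(ang_pos m q).le, (ang_lt m q q.2).le⟩ h''
    unfold ang at this
    field_simp at this
    have : (p : ℝ) = (q : ℕ) := by linarith
    exact Fin.ext (by exact_mod_cast this)
  · intro p h
    have hp := p.2
    have := congrFun h ⟨0, by omega⟩
    simp only [Matrix.col_apply, eigM, Matrix.of_apply, Pi.zero_apply] at this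
    have hs := Real.sin_pos_of_pos_of_lt_pi (ang_pos m p) (ang_lt m p hp)
    simp [-Complex.ofReal_sin] at this
    exact hs.ne' (by exact_mod_cast this)

theorem sin_rev (m j p q : ℕ) (h : p + q + 1 = m) :
    Real.sin (((j : ℝ) + 1) * ang m p) = (-1) ^ j * Real.sin (((j : ℝ) + 1) * ang m q) := by
  rw [ang_rev m p q h, mul_sub]
  have := Real.sin_nat_mul_pi_sub (((j : ℝ) + 1) * ang m q) (j + 1)
  push_cast at this
  rw [this, pow_succ]; ring

theorem sin_rev' (m i j p : ℕ) (h : i + j + 1 = m) :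
    Real.sin (((i : ℝ) + 1) * ang m p) = (-1) ^ p * Real.sin (((j : ℝ) + 1) * ang m p) := by
  have e : ((i : ℝ) + 1) * ang m p = ((p : ℝ) + 1) * Real.pi - ((j : ℝ) + 1) * ang m p := by
    rw [← ang_top m p]
    subst h
    push_cast
    ring
  rw [e]
  have := Real.sin_nat_mul_pi_sub (((j : ℝ) + 1) * ang m p) (p + 1)
  push_cast at this
  rw [this, pow_succ]; ring

theorem anti_eig (m : ℕ) :
    antiDiagOnes m * eigM m Complex.I = eigM m Complex.I *
      xMat m 0 (fun p => Complex.I ^ (m - 1) * (-1) ^ p) := by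
  ext j p
  have hj := j.2
  have hp := p.2
  rw [Matrix.mul_apply, Matrix.mul_apply]
  rw [Finset.sum_eq_single (⟨m - 1 - j, by omega⟩ : Fin m)]
  rotate_left
  · intro b _ hb
    have : ¬ ((j : ℕ) + b + 1 = m) := by
      intro h; apply hb; apply Fin.ext; simp only; omega
    simp [antiDiagOnes, this]
  · simp
  rw [Finset.sum_eq_single (⟨m - 1 - p, by omega⟩ : Fin m)]
  rotate_left
  · intro b _ hb
    have : ¬ ((b : ℕ) + p + 1 = m) := by
      intro h; apply hb; apply Fin.ext; simp only; omega
    simp [xMat, this]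
  · simp
  have e1 : (j : ℕ) + (m - 1 - j) + 1 = m := by omega
  have e2 : m - 1 - (p : ℕ) + p + 1 = m := by omega
  simp only [antiDiagOnes, eigM, xMat, Matrix.of_apply, e1, e2, if_true, Pi.zero_apply, ite_self,
    zero_add, one_mul]
  rw [sin_rev' m (m - 1 - j) j p (by omega), sin_rev m j (m - 1 - p) p (by omega)]
  have e3 : Complex.I ^ (m - 1) = Complex.I ^ (m - 1 - (j : ℕ)) * Complex.I ^ (j : ℕ) := by
    rw [← pow_add]; congr 1; omega
  have e4 : Complex.I ^ (j : ℕ) * Complex.I ^ (j : ℕ) * (-1) ^ (j : ℕ) = 1 := by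
    rw [← mul_pow, ← mul_pow]; simp
  rw [e3]
  push_cast [-Complex.ofReal_sin, -Complex.ofReal_cos]
  linear_combination (-Complex.I ^ (m - 1 - (j : ℕ)) * (-1) ^ (p : ℕ) *
    (Real.sin (((j : ℕ) + 1 : ℝ) * ang m p) : ℂ)) * e4

theorem block_det (m : ℕ) (x a : ℝ) (μ : ℂ) :
    (triToeplitz m (-(a : ℂ)) x a + μ • antiDiagOnes m).det
      = (∏ k ∈ Finset.range (m / 2), ((x : ℂ) ^ 2 + 4 * a ^ 2 * (Real.cos (ang m k) : ℂ) ^ 2 - μ ^ 2))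
        * (if Even m then 1 else x + μ) := by
  have hA := tri_eig m (-(a : ℂ)) x a Complex.I (Complex.I * a) Complex.I_ne_zero rfl (by
    linear_combination (a : ℂ) * Complex.I_mul_I)
  have hJ := anti_eig m
  have hU := (Matrix.isUnit_iff_isUnit_det _).1 (eigM_isUnit m Complex.I Complex.I_ne_zero)
  have hX : (triToeplitz m (-(a : ℂ)) x a + μ • antiDiagOnes m) * eigM m Complex.I
      = eigM m Complex.I * xMat m (fun p => x + 2 * (Complex.I * a) * (Real.cos (ang m p) : ℂ))
          (fun p => μ * (Complex.I ^ (m - 1) * (-1) ^ p)) := by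
    rw [add_mul, smul_mul_assoc, hA, hJ, ← mul_smul_comm, ← mul_add]
    congr 1
    ext p q
    simp only [xMat, Matrix.add_apply, Matrix.smul_apply, Matrix.of_apply, Matrix.diagonal_apply,
      Pi.zero_apply, ite_self, zero_add, smul_eq_mul, mul_ite, mul_zero]
    by_cases h : p = q
    · subst h; rfl
    · simp [h]
  have hdet := congrArg Matrix.det hX
  rw [Matrix.det_mul, Matrix.det_mul, mul_comm] at hdet
  rw [hU.mul_left_cancel hdet, xMat_det]
  congr 1
  · refine Finset.prod_congr rfl fun k hk => ?_
    rw [Finset.mem_range] at hk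
    have c : Real.cos (ang m (m - 1 - k)) = - Real.cos (ang m k) := by
      rw [ang_rev m (m - 1 - k) k (by omega), Real.cos_pi_sub]
    have e : (Complex.I ^ (m - 1) * (-1) ^ k) * (Complex.I ^ (m - 1) * (-1) ^ (m - 1 - k)) = 1 := by
      have : (-1 : ℂ) ^ (m - 1) = (-1) ^ k * (-1) ^ (m - 1 - k) := by
        rw [← pow_add]; congr 1; omega
      calc _ = (Complex.I * Complex.I) ^ (m - 1) * ((-1) ^ k * (-1) ^ (m - 1 - k)) := by
            rw [mul_pow]; ring
        _ = 1 := by rw [← this, ← mul_pow]; simp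
    rw [c]
    push_cast [-Complex.ofReal_sin, -Complex.ofReal_cos]
    linear_combination (-μ ^ 2) * e
      - 4 * (a : ℂ) ^ 2 * (Real.cos (ang m k) : ℂ) ^ 2 * Complex.I_mul_I
  · split_ifs with hm
    · rfl
    · rw [Nat.not_even_iff_odd] at hm
      obtain ⟨t, rfl⟩ := hm
      have h1 : (2 * t + 1) / 2 = t := by omega
      have h2 : 2 * t + 1 - 1 = 2 * t := by omega
      have h3 : Real.cos (ang (2 * t + 1) t) = 0 := by
        have : ang (2 * t + 1) t = Real.pi / 2 := by
          unfold ang; push_cast; field_simp; ring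
        rw [this, Real.cos_pi_div_two]
      rw [h1, h2, h3, pow_mul, Complex.I_sq, ← mul_pow]
      simp

theorem exists_sym (b₁ b₂ : ℝ) : ∃ r β : ℂ, r ≠ 0 ∧ β = r * ((b₁ : ℂ) + Complex.I * b₂) ∧
    β * r = -(b₁ : ℂ) + Complex.I * b₂ ∧ β ^ 2 = -((b₁ : ℂ) ^ 2 + (b₂ : ℂ) ^ 2) := by
  by_cases h : (b₁ : ℂ) + Complex.I * b₂ = 0
  · have h1 : b₁ = 0 := by simpa using congrArg Complex.re h
    have h2 : b₂ = 0 := by simpa using congrArg Complex.im h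
    exact ⟨1, 0, one_ne_zero, by simp [h1, h2], by simp [h1, h2], by simp [h1, h2]⟩
  · obtain ⟨β, hβ⟩ := IsAlgClosed.exists_pow_nat_eq (-((b₁ : ℂ) ^ 2 + (b₂ : ℂ) ^ 2)) (n := 2) two_pos
    have hprod : ((b₁ : ℂ) + Complex.I * b₂) * (-(b₁ : ℂ) + Complex.I * b₂)
        = -((b₁ : ℂ) ^ 2 + (b₂ : ℂ) ^ 2) := by
      linear_combination (b₂ : ℂ) ^ 2 * Complex.I_mul_I
    have hβ0 : β ≠ 0 := by
      rintro rfl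
      have : (((b₁ ^ 2 + b₂ ^ 2 : ℝ)) : ℂ) = 0 := by
        push_cast; linear_combination hβ
      have h' : b₁ ^ 2 + b₂ ^ 2 = 0 := by exact_mod_cast this
      have h1 : b₁ = 0 := by nlinarith [sq_nonneg b₁, sq_nonneg b₂]
      have h2 : b₂ = 0 := by nlinarith [sq_nonneg b₁, sq_nonneg b₂]
      exact h (by simp [h1, h2])
    refine ⟨β / ((b₁ : ℂ) + Complex.I * b₂), β, div_ne_zero hβ0 h, by field_simp, ?_, hβ⟩
    rw [mul_div_assoc', div_eq_iff h]
    linear_combination hβ - hprod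

theorem kron_det (m n : ℕ) (A J : Matrix (Fin m) (Fin m) ℂ) (B P : Matrix (Fin n) (Fin n) ℂ)
    (μ : Fin n → ℂ) (hP : IsUnit P) (h : B * P = P * Matrix.diagonal μ) :
    ((1 : Matrix (Fin n) (Fin n) ℂ) ⊗ₖ A + B ⊗ₖ J).det = ∏ k, (A + μ k • J).det := by
  have hX : ((1 : Matrix (Fin n) (Fin n) ℂ) ⊗ₖ A + B ⊗ₖ J) * (P ⊗ₖ (1 : Matrix (Fin m) (Fin m) ℂ))
      = (P ⊗ₖ (1 : Matrix (Fin m) (Fin m) ℂ)) *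
        ((1 : Matrix (Fin n) (Fin n) ℂ) ⊗ₖ A + Matrix.diagonal μ ⊗ₖ J) := by
    rw [add_mul, mul_add]
    simp only [← Matrix.mul_kronecker_mul, h, one_mul, mul_one]
  have hU : IsUnit (P ⊗ₖ (1 : Matrix (Fin m) (Fin m) ℂ)).det := by
    rw [Matrix.det_kronecker]
    exact (((Matrix.isUnit_iff_isUnit_det _).1 hP).pow _).mul (by simp)
  have hdet := congrArg Matrix.det hX
  rw [Matrix.det_mul, Matrix.det_mul, mul_comm] at hdet
  rw [hU.mul_left_cancel hdet, ← Matrix.det_blockDiagonal,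
    ← Matrix.det_submatrix_equiv_self (Equiv.prodComm (Fin n) (Fin m))]
  congr 1
  ext ⟨i, k⟩ ⟨j, l⟩
  simp only [Matrix.add_apply, Matrix.kroneckerMap_apply, Matrix.submatrix_apply,
    Equiv.prodComm_apply, Prod.swap_prod_mk, Matrix.blockDiagonal_apply, Matrix.one_apply,
    Matrix.diagonal_apply]
  by_cases hij : i = j
  · subst hij; simp
  · simp [hij]

theorem prod_shift (m : ℕ) (N : ℕ) (f : ℝ → ℝ) :
    ∏ j ∈ Finset.Icc 1 N, f (Real.cos ((j : ℝ) * Real.pi / ((m : ℝ) + 1)))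
      = ∏ k ∈ Finset.range N, f (Real.cos (ang m k)) := by
  induction N with
  | zero => simp
  | succ N ih =>
    rw [Finset.prod_Icc_succ_top (by omega), Finset.prod_range_succ, ih]
    simp [ang]

theorem gridDicot_partition_function (m n : ℕ) (hm : 1 ≤ m) (hn : 1 ≤ n)
    (x a b₁ b₂ : ℝ) :
    ((1 : Matrix (Fin n) (Fin n) ℂ) ⊗ₖ triToeplitz m (-(a:ℂ)) (x:ℂ) (a:ℂ)
      + triToeplitz n (-(b₁:ℂ) + Complex.I * (b₂:ℂ)) 0 ((b₁:ℂ) + Complex.I * (b₂:ℂ))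
          ⊗ₖ antiDiagOnes m).det
    = (((∏ j ∈ Finset.Icc 1 (m / 2), ∏ k ∈ Finset.Icc 1 (n / 2),
          (x ^ 2 + 4 * a ^ 2 * Real.cos ((j : ℝ) * Real.pi / ((m : ℝ) + 1)) ^ 2
            + 4 * (b₁ ^ 2 + b₂ ^ 2) * Real.cos ((k : ℝ) * Real.pi / ((n : ℝ) + 1)) ^ 2)) ^ 2
        * (if Even m then (if Even n then 1 else Y m a 0 x)
           else (if Even n then Y n b₁ b₂ x else x * Y m a 0 x * Y n b₁ b₂ x)) : ℝ) : ℂ) := by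
  obtain ⟨r, β, hr, h1, h2, hβ⟩ := exists_sym b₁ b₂
  rw [kron_det m n _ _ _ _ _ (eigM_isUnit n r hr) (tri_eig n _ 0 _ r β hr h1 h2)]
  simp only [block_det, zero_add]
  rw [prod_fold n (fun k : ℕ => (∏ j ∈ Finset.range (m / 2),
    ((x : ℂ) ^ 2 + 4 * a ^ 2 * (Real.cos (ang m j) : ℂ) ^ 2
      - (2 * β * (Real.cos (ang n k) : ℂ)) ^ 2))
        * (if Even m then 1 else x + 2 * β * (Real.cos (ang n k) : ℂ)))]
  have hY : ∀ (l : ℕ) (b c : ℝ), Y l b c x = ∏ k ∈ Finset.range (l / 2),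
      (x ^ 2 + 4 * (b ^ 2 + c ^ 2) * Real.cos (ang l k) ^ 2) := by
    intro l b c
    exact prod_shift l (l / 2) (fun t => x ^ 2 + 4 * (b ^ 2 + c ^ 2) * t ^ 2)
  have hD : (∏ j ∈ Finset.Icc 1 (m / 2), ∏ k ∈ Finset.Icc 1 (n / 2),
          (x ^ 2 + 4 * a ^ 2 * Real.cos ((j : ℝ) * Real.pi / ((m : ℝ) + 1)) ^ 2
            + 4 * (b₁ ^ 2 + b₂ ^ 2) * Real.cos ((k : ℝ) * Real.pi / ((n : ℝ) + 1)) ^ 2))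
      = ∏ k ∈ Finset.range (n / 2), ∏ j ∈ Finset.range (m / 2),
          (x ^ 2 + 4 * a ^ 2 * Real.cos (ang m j) ^ 2
            + 4 * (b₁ ^ 2 + b₂ ^ 2) * Real.cos (ang n k) ^ 2) := by
    rw [prod_shift m (m / 2) (fun s => ∏ k ∈ Finset.Icc 1 (n / 2),
          (x ^ 2 + 4 * a ^ 2 * s ^ 2
            + 4 * (b₁ ^ 2 + b₂ ^ 2) * Real.cos ((k : ℝ) * Real.pi / ((n : ℝ) + 1)) ^ 2))]
    conv_rhs => rw [Finset.prod_comm]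
    refine Finset.prod_congr rfl fun j _ => ?_
    exact prod_shift n (n / 2) (fun t => x ^ 2 + 4 * a ^ 2 * Real.cos (ang m j) ^ 2
            + 4 * (b₁ ^ 2 + b₂ ^ 2) * t ^ 2)
  rw [hD, hY, hY]
  have hpair : ∀ k ∈ Finset.range (n / 2),
      ((∏ j ∈ Finset.range (m / 2), ((x : ℂ) ^ 2 + 4 * a ^ 2 * (Real.cos (ang m j) : ℂ) ^ 2
          - (2 * β * (Real.cos (ang n k) : ℂ)) ^ 2))
        * (if Even m then 1 else x + 2 * β * (Real.cos (ang n k) : ℂ))) *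
      ((∏ j ∈ Finset.range (m / 2), ((x : ℂ) ^ 2 + 4 * a ^ 2 * (Real.cos (ang m j) : ℂ) ^ 2
          - (2 * β * (Real.cos (ang n (n - 1 - k)) : ℂ)) ^ 2))
        * (if Even m then 1 else x + 2 * β * (Real.cos (ang n (n - 1 - k)) : ℂ)))
      = (((∏ j ∈ Finset.range (m / 2), (x ^ 2 + 4 * a ^ 2 * Real.cos (ang m j) ^ 2
            + 4 * (b₁ ^ 2 + b₂ ^ 2) * Real.cos (ang n k) ^ 2)) ^ 2 : ℝ) : ℂ)
        * (if Even m then 1 else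
          ((x ^ 2 + 4 * (b₁ ^ 2 + b₂ ^ 2) * Real.cos (ang n k) ^ 2 : ℝ) : ℂ)) := by
    intro k hk
    rw [Finset.mem_range] at hk
    have c : Real.cos (ang n (n - 1 - k)) = - Real.cos (ang n k) := by
      rw [ang_rev n (n - 1 - k) k (by omega), Real.cos_pi_sub]
    have hp : ∏ j ∈ Finset.range (m / 2), ((x : ℂ) ^ 2 + 4 * a ^ 2 * (Real.cos (ang m j) : ℂ) ^ 2
          - (2 * β * (Real.cos (ang n k) : ℂ)) ^ 2)
        = ((∏ j ∈ Finset.range (m / 2), (x ^ 2 + 4 * a ^ 2 * Real.cos (ang m j) ^ 2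
            + 4 * (b₁ ^ 2 + b₂ ^ 2) * Real.cos (ang n k) ^ 2) : ℝ) : ℂ) := by
      rw [Complex.ofReal_prod]
      refine Finset.prod_congr rfl fun j _ => ?_
      push_cast [-Complex.ofReal_sin, -Complex.ofReal_cos]
      linear_combination (-4 * (Real.cos (ang n k) : ℂ) ^ 2) * hβ
    have hs : (2 * β * ((-Real.cos (ang n k) : ℝ) : ℂ)) ^ 2
        = (2 * β * (Real.cos (ang n k) : ℂ)) ^ 2 := by
      push_cast [-Complex.ofReal_sin, -Complex.ofReal_cos]; ring
    rw [c, hs, hp]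
    split_ifs with he
    · push_cast [-Complex.ofReal_sin, -Complex.ofReal_cos]; ring
    · rw [Complex.ofReal_pow]
      generalize ((∏ j ∈ Finset.range (m / 2), (x ^ 2 + 4 * a ^ 2 * Real.cos (ang m j) ^ 2
            + 4 * (b₁ ^ 2 + b₂ ^ 2) * Real.cos (ang n k) ^ 2) : ℝ) : ℂ) = Z
      push_cast [-Complex.ofReal_sin, -Complex.ofReal_cos]
      linear_combination (-4 * Z ^ 2 * (Real.cos (ang n k) : ℂ) ^ 2) * hβ
  rw [Finset.prod_congr rfl hpair, Finset.prod_mul_distrib, ← Complex.ofReal_prod,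
    Finset.prod_pow]
  rw [Complex.ofReal_mul, mul_assoc]
  congr 1
  have hmid : ¬ Even n → Real.cos (ang n (n / 2)) = 0 := by
    intro h
    rw [Nat.not_even_iff_odd] at h
    obtain ⟨t, rfl⟩ := h
    have e : (2 * t + 1) / 2 = t := by omega
    have : ang (2 * t + 1) t = Real.pi / 2 := by
      unfold ang; push_cast; field_simp; ring
    rw [e, this, Real.cos_pi_div_two]
  by_cases hme : Even m <;> by_cases hne : Even n
  · simp [hme, hne]
  · rw [hmid hne]
    simp [hme, hne]
  · simp [hme, hne]
  · rw [hmid hne]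
    simp [hme, hne]
    ring
end

section
/- Let m, n ≥ 1 and let x, a, b be real numbers. Let K be the 4mn×4mn complex matrix K = I_{2n} ⊗ T_{2m}(−a, x, a) + T_{2n}(−b, 0, b) ⊗ J_{2m}. Then det K = [ ∏_{j=1}^{m} ∏_{k=1}^{n} ( x² + 4a² cos²(jπ/(2m+1)) + 4b² cos²(kπ/(2n+1)) ) ]². -/
open Matrix Kronecker Real Finset

/-- The basic skew tridiagonal matrix. -/
def gA (N : ℕ) : Matrix (Fin N) (Fin N) ℂ := triToeplitz N (-1) 0 1

lemma tri_eq (N : ℕ) (a x : ℂ) :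
    triToeplitz N (-a) x a = x • (1 : Matrix (Fin N) (Fin N) ℂ) + a • gA N := by
  ext i j
  simp only [gA, triToeplitz, Matrix.of_apply, Matrix.add_apply, Matrix.smul_apply, Matrix.one_apply,
    smul_eq_mul]
  split_ifs <;> simp

lemma gA_transpose (N : ℕ) : (gA N)ᵀ = - gA N := by
  ext i j
  simp only [gA, triToeplitz, Matrix.of_apply, Matrix.transpose_apply, Matrix.neg_apply, Fin.ext_iff]
  split_ifs <;> first | omega | simp

lemma J_eq (N : ℕ) (i j : Fin N) : antiDiagOnes N i j = if j = Fin.rev i then 1 else 0 := by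
  simp only [antiDiagOnes, Matrix.of_apply, Fin.ext_iff, Fin.val_rev]
  congr 1
  apply propext
  omega

lemma J_mul (N : ℕ) (A : Matrix (Fin N) (Fin N) ℂ) (i j : Fin N) :
    (antiDiagOnes N * A) i j = A (Fin.rev i) j := by
  simp [Matrix.mul_apply, J_eq]

lemma mul_J (N : ℕ) (A : Matrix (Fin N) (Fin N) ℂ) (i j : Fin N) :
    (A * antiDiagOnes N) i j = A i (Fin.rev j) := by
  have : ∀ k : Fin N, (j = Fin.rev k) ↔ (k = Fin.rev j) := by
    intro k
    simp only [Fin.ext_iff, Fin.val_rev]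
    omega
  simp [Matrix.mul_apply, J_eq, this]

lemma J_sq (N : ℕ) : antiDiagOnes N * antiDiagOnes N = 1 := by
  ext i j
  rw [J_mul, J_eq, Fin.rev_rev, Matrix.one_apply]
  simp [eq_comm]

lemma antiDiag_transpose (N : ℕ) : (antiDiagOnes N)ᵀ = antiDiagOnes N := by
  ext i j
  simp [antiDiagOnes, add_comm (i : ℕ)]

lemma J_anti (N : ℕ) : antiDiagOnes N * gA N = - (gA N * antiDiagOnes N) := by
  ext i j
  rw [Matrix.neg_apply, J_mul, mul_J]
  simp only [gA, triToeplitz, Matrix.of_apply, Fin.ext_iff, Fin.val_rev]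
  split_ifs <;> first | omega | simp

/-- Angles. -/
noncomputable def gth (N : ℕ) (j : ℕ) : ℝ := ((j : ℝ) + 1) * Real.pi / ((N : ℝ) + 1)

/-- Eigenvalues. -/
noncomputable def glam (N : ℕ) (j : Fin N) : ℂ := 2 * Complex.I * (Real.cos (gth N j) : ℝ)

/-- Eigenvector matrix. -/
noncomputable def gV (N : ℕ) : Matrix (Fin N) (Fin N) ℂ :=
  Matrix.of fun k j => Complex.I ^ (k : ℕ) * (Real.sin (((k : ℕ) + 1 : ℝ) * gth N j) : ℝ)

lemma gA_mulVec (N : ℕ) (w : ℕ → ℂ) (h0 : w 0 = 0) (hN : w (N + 1) = 0) (i : Fin N) :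
    ∑ k : Fin N, gA N i k * w (k + 1) = w (i + 2) - w i := by
  have h : ∀ k : Fin N, gA N i k * w (k + 1) =
      (if (k : ℕ) = i + 1 then w (i + 2) else 0) - (if (k : ℕ) + 1 = i then w i else 0) := by
    intro k
    simp only [gA, triToeplitz, Matrix.of_apply, Fin.ext_iff]
    rcases eq_or_ne (k : ℕ) (i + 1) with h1 | h1
    · rw [if_neg (by omega), if_pos (by omega), if_pos h1, if_neg (by omega), h1]
      simp
    · rcases eq_or_ne ((k : ℕ) + 1) i with h2 | h2
      · rw [if_neg (by omega), if_neg (by omega), if_pos h2, if_neg h1, if_pos h2, h2]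
        simp
      · rw [if_neg h1, if_neg h2, if_neg (by omega : ¬ ((i : ℕ) + 1 = k)), if_neg h2]
        simp
  rw [Finset.sum_congr rfl (fun k _ => h k), Finset.sum_sub_distrib]
  congr 1
  · rw [Fin.sum_univ_eq_sum_range (fun k => if k = (i : ℕ) + 1 then w (i + 2) else 0)]
    rw [Finset.sum_ite_eq']
    split_ifs with h
    · rfl
    · have : (i : ℕ) + 2 = N + 1 := by
        have := i.2
        simp at h
        omega
      rw [this, hN]
  · rw [Fin.sum_univ_eq_sum_range (fun k => if k + 1 = (i : ℕ) then w i else 0)]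
    rcases Nat.eq_zero_or_pos (i : ℕ) with h | h
    · rw [h]; simp [h0]
    · have : ∀ k, (k + 1 = (i : ℕ)) ↔ k = (i : ℕ) - 1 := by intro k; omega
      simp only [this]
      rw [Finset.sum_ite_eq', if_pos]
      have := i.2
      simp
      omega

lemma gA_eig (N : ℕ) : gA N * gV N = gV N * Matrix.diagonal (glam N) := by
  ext i j
  rw [Matrix.mul_diagonal, Matrix.mul_apply]
  have h := gA_mulVec N (fun k => Complex.I ^ (k + 3) * (Real.sin ((k : ℝ) * gth N j) : ℝ))
    (by simp) (by
      have : ((N + 1 : ℕ) : ℝ) * gth N j = ((j + 1 : ℕ) : ℝ) * Real.pi := by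
        unfold gth
        have : (N : ℝ) + 1 ≠ 0 := by positivity
        push_cast
        field_simp
      simp only [this, Real.sin_nat_mul_pi]
      simp) i
  have e : ∀ k : Fin N, gA N i k * gV N k j = gA N i k *
      (fun k : ℕ => Complex.I ^ (k + 3) * ((Real.sin ((k : ℝ) * gth N j) : ℝ) : ℂ)) (k + 1) := by
    intro k
    simp only [gV, Matrix.of_apply]
    have : Complex.I ^ ((k : ℕ) + 1 + 3) = Complex.I ^ (k : ℕ) := by
      rw [add_assoc, pow_add]; norm_num
    rw [this]
    push_cast
    rfl
  rw [Finset.sum_congr rfl (fun k _ => e k), h]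
  simp only [gV, Matrix.of_apply, glam]
  set t := gth N j
  have h1 : Real.sin (((i + 2 : ℕ) : ℝ) * t) + Real.sin ((i : ℝ) * t)
      = 2 * Real.sin (((i : ℝ) + 1) * t) * Real.cos t := by
    have e1 : ((i + 2 : ℕ) : ℝ) * t = ((i : ℝ) + 1) * t + t := by push_cast; ring
    have e2 : (i : ℝ) * t = ((i : ℝ) + 1) * t - t := by ring
    rw [e1, e2, Real.sin_add, Real.sin_sub]
    ring
  have h2 : ((Real.sin (((i + 2 : ℕ) : ℝ) * t) : ℝ) : ℂ) + ((Real.sin ((i : ℝ) * t) : ℝ) : ℂ)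
      = 2 * ((Real.sin (((i : ℝ) + 1) * t) : ℝ) : ℂ) * ((Real.cos t : ℝ) : ℂ) := by
    exact_mod_cast h1
  have i3 : Complex.I ^ ((i : ℕ) + 3) = - (Complex.I * Complex.I ^ (i : ℕ)) := by
    rw [pow_add, Complex.I_pow_three]; ring
  have i5 : Complex.I ^ ((i : ℕ) + 2 + 3) = Complex.I * Complex.I ^ (i : ℕ) := by
    rw [add_assoc, pow_add, show 2 + 3 = 4 + 1 from rfl, pow_succ Complex.I 4, Complex.I_pow_four]; ring
  rw [i3, i5]
  linear_combination (Complex.I * Complex.I ^ (i : ℕ)) * h2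

lemma gth_mem (N : ℕ) (j : Fin N) : 0 < gth N j ∧ gth N j < Real.pi := by
  unfold gth
  have hp := Real.pi_pos
  refine ⟨by positivity, ?_⟩
  rw [div_lt_iff₀ (by positivity), mul_comm]
  have : (j : ℝ) < N := by exact_mod_cast j.2
  gcongr

lemma glam_inj (N : ℕ) : Function.Injective (glam N) := by
  intro i j h
  unfold glam at h
  have h1 : Real.cos (gth N i) = Real.cos (gth N j) := by
    have := mul_left_cancel₀ (by simp) h
    exact_mod_cast this
  have h2 := Real.injOn_cos ⟨(gth_mem N i).1.le, (gth_mem N i).2.le⟩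
    ⟨(gth_mem N j).1.le, (gth_mem N j).2.le⟩ h1
  unfold gth at h2
  have hp := Real.pi_ne_zero
  have : (N : ℝ) + 1 ≠ 0 := by positivity
  field_simp at h2
  apply Fin.ext
  have : (i : ℝ) = j := by linarith
  exact_mod_cast this

lemma gV_det (N : ℕ) : (gV N).det ≠ 0 := by
  have hli : LinearIndependent ℂ (gV N).col := by
    apply Module.End.eigenvectors_linearIndependent' (Matrix.toLin' (gA N)) (glam N) (glam_inj N)
    intro j
    rw [Module.End.hasEigenvector_iff, Module.End.mem_eigenspace_iff]
    constructor
    · ext i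
      have := congrFun (congrFun (gA_eig N) i) j
      rw [Matrix.mul_diagonal, Matrix.mul_apply] at this
      simp only [Matrix.toLin'_apply, Matrix.mulVec, dotProduct, Matrix.col_apply, Pi.smul_apply, smul_eq_mul]
      rw [this, mul_comm]
    · intro h
      have hN : 0 < N := lt_of_le_of_lt (Nat.zero_le _) j.2
      have := congrFun h ⟨0, hN⟩
      have hs := Real.sin_pos_of_pos_of_lt_pi (gth_mem N j).1 (gth_mem N j).2
      simp only [Matrix.col_apply, gV, Matrix.of_apply] at this
      simp at this
      have h3 : Real.sin (gth N j) = 0 := by exact_mod_cast this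
      exact hs.ne' h3
  rw [Matrix.linearIndependent_cols_iff_isUnit, Matrix.isUnit_iff_isUnit_det] at hli
  exact hli.ne_zero

/-- The trace-free part. -/
noncomputable def gM (m n : ℕ) (a b : ℂ) : Matrix (Fin n × Fin m) (Fin n × Fin m) ℂ :=
  a • ((1 : Matrix (Fin n) (Fin n) ℂ) ⊗ₖ gA m) + b • (gA n ⊗ₖ antiDiagOnes m)

lemma gM_transpose (m n : ℕ) (a b : ℂ) : (gM m n a b)ᵀ = - gM m n a b := by
  unfold gM
  have h1 : ((1 : Matrix (Fin n) (Fin n) ℂ) ⊗ₖ gA m)ᵀ = - ((1 : Matrix (Fin n) (Fin n) ℂ) ⊗ₖ gA m) := by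
    rw [← Matrix.kroneckerMap_transpose, gA_transpose, Matrix.transpose_one]
    ext i j; simp
  have h2 : (gA n ⊗ₖ antiDiagOnes m)ᵀ = - (gA n ⊗ₖ antiDiagOnes m) := by
    rw [← Matrix.kroneckerMap_transpose, gA_transpose, antiDiag_transpose]
    ext i j; simp
  rw [Matrix.transpose_add, Matrix.transpose_smul, Matrix.transpose_smul, h1, h2]
  simp [add_comm]

lemma gM_sq (m n : ℕ) (a b : ℂ) : gM m n a b * gM m n a b =
    a ^ 2 • ((1 : Matrix (Fin n) (Fin n) ℂ) ⊗ₖ (gA m * gA m)) +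
    b ^ 2 • ((gA n * gA n) ⊗ₖ (1 : Matrix (Fin m) (Fin m) ℂ)) := by
  unfold gM
  have h : gA n ⊗ₖ (antiDiagOnes m * gA m) = - (gA n ⊗ₖ (gA m * antiDiagOnes m)) := by
    rw [J_anti]; ext i j; simp
  simp only [Matrix.add_mul, Matrix.mul_add, Matrix.smul_mul, Matrix.mul_smul,
    ← Matrix.mul_kronecker_mul, Matrix.one_mul, Matrix.mul_one, J_sq, h, smul_add, smul_neg, smul_smul]
  rw [mul_comm b a, pow_two, pow_two]
  abel

lemma gM_sq_eig (m n : ℕ) (a b : ℂ) : (gM m n a b * gM m n a b) * (gV n ⊗ₖ gV m) =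
    (gV n ⊗ₖ gV m) * Matrix.diagonal (fun p => a ^ 2 * glam m p.2 ^ 2 + b ^ 2 * glam n p.1 ^ 2) := by
  have hs : ∀ N, (gA N * gA N) * gV N = gV N * Matrix.diagonal (fun j => glam N j ^ 2) := by
    intro N
    rw [Matrix.mul_assoc, gA_eig, ← Matrix.mul_assoc, gA_eig, Matrix.mul_assoc,
      Matrix.diagonal_mul_diagonal]
    simp only [pow_two]
  rw [gM_sq, Matrix.add_mul, Matrix.smul_mul, Matrix.smul_mul, ← Matrix.mul_kronecker_mul,
    ← Matrix.mul_kronecker_mul, hs, hs]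
  ext ⟨i, j⟩ ⟨k, l⟩
  simp only [Matrix.one_mul, Matrix.add_apply, Matrix.smul_apply, Matrix.kroneckerMap_apply,
    Matrix.mul_diagonal, smul_eq_mul]
  ring

lemma det_sq (m n : ℕ) (a b x : ℂ) :
    (x • (1 : Matrix (Fin n × Fin m) (Fin n × Fin m) ℂ) + gM m n a b).det ^ 2 =
    ∏ p : Fin n × Fin m, (x ^ 2 - (a ^ 2 * glam m p.2 ^ 2 + b ^ 2 * glam n p.1 ^ 2)) := by
  set M := gM m n a b with hM
  have ht : (x • (1 : Matrix (Fin n × Fin m) (Fin n × Fin m) ℂ) + M).det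
      = (x • (1 : Matrix (Fin n × Fin m) (Fin n × Fin m) ℂ) - M).det := by
    rw [← Matrix.det_transpose, Matrix.transpose_add, hM, gM_transpose, Matrix.transpose_smul,
      Matrix.transpose_one, sub_eq_add_neg]
  have hprod : (x • (1 : Matrix (Fin n × Fin m) (Fin n × Fin m) ℂ) + M) * (x • 1 - M)
      = x ^ 2 • 1 - M * M := by
    simp only [Matrix.add_mul, Matrix.mul_sub, Matrix.smul_mul, Matrix.mul_smul, Matrix.one_mul,
      Matrix.mul_one, smul_sub, smul_add, smul_smul, pow_two]
    abel
  have hW : (gV n ⊗ₖ gV m).det ≠ 0 := by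
    rw [Matrix.det_kronecker]
    exact mul_ne_zero (pow_ne_zero _ (gV_det n)) (pow_ne_zero _ (gV_det m))
  have hd : (x ^ 2 • 1 - M * M) * (gV n ⊗ₖ gV m) = (gV n ⊗ₖ gV m) * Matrix.diagonal
      (fun p => x ^ 2 - (a ^ 2 * glam m p.2 ^ 2 + b ^ 2 * glam n p.1 ^ 2)) := by
    rw [Matrix.sub_mul, hM, gM_sq_eig]
    ext p q
    simp only [Matrix.sub_apply, Matrix.smul_mul, Matrix.one_mul, Matrix.smul_apply,
      Matrix.mul_diagonal, smul_eq_mul]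
    ring
  have := congrArg Matrix.det hd
  rw [Matrix.det_mul, Matrix.det_mul, Matrix.det_diagonal, mul_comm] at this
  rw [← mul_left_cancel₀ hW this, ← hprod, Matrix.det_mul, ← ht, pow_two]

lemma prod_half (m : ℕ) (g : ℝ → ℂ) :
    ∏ j : Fin (2 * m), g (Real.cos (gth (2 * m) j) ^ 2) =
    (∏ j ∈ Finset.Icc 1 m, g (Real.cos ((j : ℝ) * Real.pi / (2 * (m : ℝ) + 1)) ^ 2)) ^ 2 := by
  rw [Fin.prod_univ_eq_prod_range (fun j => g (Real.cos (gth (2 * m) j) ^ 2)) (2 * m), two_mul m,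
    Finset.prod_range_add, pow_two]
  have h1 : ∏ j ∈ Finset.Icc 1 m, g (Real.cos ((j : ℝ) * Real.pi / (2 * (m : ℝ) + 1)) ^ 2)
      = ∏ j ∈ Finset.range m, g (Real.cos (gth (m + m) j) ^ 2) := by
    rw [Finset.range_eq_Ico, ← Finset.Ico_add_one_right_eq_Icc,
      Finset.prod_Ico_eq_prod_range, Finset.prod_Ico_eq_prod_range]
    apply Finset.prod_congr rfl
    intro j _
    unfold gth
    push_cast
    congr 4
    · ring
    · ring
  rw [h1]
  congr 1
  rw [← Finset.prod_range_reflect]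
  apply Finset.prod_congr rfl
  intro j hj
  have hj' : j < m := Finset.mem_range.1 hj
  have : gth (m + m) (m + (m - 1 - j)) = Real.pi - gth (m + m) j := by
    unfold gth
    have e : ((m + (m - 1 - j) : ℕ) : ℝ) = 2 * m - 1 - j := by
      have : m + (m - 1 - j) + 1 + j = 2 * m := by omega
      have h : ((m + (m - 1 - j) + 1 + j : ℕ) : ℝ) = ((2 * m : ℕ) : ℝ) := by rw [this]
      push_cast at h ⊢
      linarith
    rw [e]
    have : ((m + m : ℕ) : ℝ) + 1 ≠ 0 := by positivity
    field_simp
    push_cast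
    ring
  rw [this, Real.cos_pi_sub, neg_sq]

/-- The claimed half product as a polynomial. -/
noncomputable def gq (m n : ℕ) (a b : ℝ) : Polynomial ℂ :=
  ∏ j ∈ Finset.Icc 1 m, ∏ k ∈ Finset.Icc 1 n, (Polynomial.X ^ 2 + Polynomial.C
    (((4 * a ^ 2 * Real.cos ((j : ℝ) * Real.pi / (2 * (m : ℝ) + 1)) ^ 2
            + 4 * b ^ 2 * Real.cos ((k : ℝ) * Real.pi / (2 * (n : ℝ) + 1)) ^ 2 : ℝ)) : ℂ))

lemma gq_monic (m n : ℕ) (a b : ℝ) : (gq m n a b).Monic := by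
  unfold gq
  apply Polynomial.monic_prod_of_monic
  intro j _
  apply Polynomial.monic_prod_of_monic
  intro k _
  exact Polynomial.monic_X_pow_add_C _ (by norm_num)

lemma det_sq' (m n : ℕ) (a b : ℝ) (x : ℂ) :
    (x • (1 : Matrix (Fin (2 * n) × Fin (2 * m)) (Fin (2 * n) × Fin (2 * m)) ℂ)
      + gM (2 * m) (2 * n) a b).det ^ 2 = (((gq m n a b).eval x) ^ 2) ^ 2 := by
  rw [det_sq, Fintype.prod_prod_type_right]
  have h1 : ∀ (j : Fin (2 * m)) (k : Fin (2 * n)), x ^ 2 - ((a : ℂ) ^ 2 * glam (2 * m) j ^ 2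
      + (b : ℂ) ^ 2 * glam (2 * n) k ^ 2) = (fun u v : ℝ => x ^ 2 + ((4 * a ^ 2 * u + 4 * b ^ 2 * v : ℝ) : ℂ))
        (Real.cos (gth (2 * m) j) ^ 2) (Real.cos (gth (2 * n) k) ^ 2) := by
    intro j k
    simp only [glam, mul_pow, Complex.I_sq]
    push_cast
    ring
  simp only [h1]
  have h2 := fun u : ℝ => prod_half n (fun v : ℝ => x ^ 2 + ((4 * a ^ 2 * u + 4 * b ^ 2 * v : ℝ) : ℂ))
  simp only [h2]
  rw [prod_half m (fun u : ℝ => (∏ j ∈ Finset.Icc 1 n, (x ^ 2 + ((4 * a ^ 2 * u +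
    4 * b ^ 2 * Real.cos ((j : ℝ) * Real.pi / (2 * (n : ℝ) + 1)) ^ 2 : ℝ) : ℂ))) ^ 2)]
  rw [Finset.prod_pow]
  congr 2
  simp only [gq, Polynomial.eval_prod, Polynomial.eval_add, Polynomial.eval_pow,
    Polynomial.eval_X, Polynomial.eval_C]

lemma det_eq (m n : ℕ) (a b : ℝ) (x : ℂ) :
    (x • (1 : Matrix (Fin (2 * n) × Fin (2 * m)) (Fin (2 * n) × Fin (2 * m)) ℂ)
      + gM (2 * m) (2 * n) a b).det = ((gq m n a b).eval x) ^ 2 := by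
  have hp : ∀ y : ℂ, (-gM (2 * m) (2 * n) a b).charpoly.eval y
      = (y • (1 : Matrix (Fin (2 * n) × Fin (2 * m)) (Fin (2 * n) × Fin (2 * m)) ℂ)
      + gM (2 * m) (2 * n) a b).det := by
    intro y
    rw [Matrix.eval_charpoly, sub_neg_eq_add, Matrix.scalar_apply, Matrix.smul_one_eq_diagonal]
  have hsq : (-gM (2 * m) (2 * n) a b).charpoly ^ 2 = (gq m n a b ^ 2) ^ 2 := by
    apply Polynomial.funext
    intro y
    rw [Polynomial.eval_pow, hp, det_sq', Polynomial.eval_pow, Polynomial.eval_pow]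
  have hmon := Matrix.charpoly_monic (-gM (2 * m) (2 * n) a b)
  have hq := (gq_monic m n a b).pow 2
  rcases sq_eq_sq_iff_eq_or_eq_neg.1 hsq with h | h
  · rw [← hp, h, Polynomial.eval_pow]
  · exfalso
    have h1 := hmon.leadingCoeff
    rw [h, Polynomial.leadingCoeff_neg, hq.leadingCoeff] at h1
    norm_num at h1

theorem grid_partition_function (m n : ℕ) (hm : 1 ≤ m) (hn : 1 ≤ n) (x a b : ℝ) :
    ((1 : Matrix (Fin (2 * n)) (Fin (2 * n)) ℂ) ⊗ₖ triToeplitz (2 * m) (-(a:ℂ)) (x:ℂ) (a:ℂ)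
      + triToeplitz (2 * n) (-(b:ℂ)) 0 (b:ℂ) ⊗ₖ antiDiagOnes (2 * m)).det
    = (((∏ j ∈ Finset.Icc 1 m, ∏ k ∈ Finset.Icc 1 n,
          (x ^ 2 + 4 * a ^ 2 * Real.cos ((j : ℝ) * Real.pi / (2 * (m : ℝ) + 1)) ^ 2
            + 4 * b ^ 2 * Real.cos ((k : ℝ) * Real.pi / (2 * (n : ℝ) + 1)) ^ 2)) ^ 2 : ℝ) : ℂ) := by
  have h : (1 : Matrix (Fin (2 * n)) (Fin (2 * n)) ℂ) ⊗ₖ triToeplitz (2 * m) (-(a:ℂ)) (x:ℂ) (a:ℂ)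
      + triToeplitz (2 * n) (-(b:ℂ)) 0 (b:ℂ) ⊗ₖ antiDiagOnes (2 * m)
      = (x : ℂ) • (1 : Matrix (Fin (2 * n) × Fin (2 * m)) (Fin (2 * n) × Fin (2 * m)) ℂ)
      + gM (2 * m) (2 * n) a b := by
    rw [tri_eq, tri_eq, gM, zero_smul, zero_add, Matrix.kronecker_add, Matrix.kronecker_smul,
      Matrix.kronecker_smul, Matrix.smul_kronecker, Matrix.one_kronecker_one, add_assoc]
  rw [h, det_eq]
  simp only [gq, Polynomial.eval_prod, Polynomial.eval_add, Polynomial.eval_pow,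
    Polynomial.eval_X, Polynomial.eval_C]
  push_cast
  simp only [add_assoc]
end
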